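/- Let (X,T) be a dynamical system on a compact metric space and μ a T-invariant Borel probability measure. Then the Bowen topological entropy of the set G_μ of μ-generic points satisfies h_top(G_μ) ≤ h_μ. -/

import Mathlib

open MeasureTheory Filter Topology Set
open scoped ENNReal NNReal

/-!  General definitions: Bowen topological entropy (via covers by Bowen balls),
measure-theoretic (Kolmogorov–Sinai) entropy, generic points, saturated systems,
and the specification property. -/

variable {X : Type*}

/-- The Bowen ball of center `x`, order `n`, radius `ε` (for the metric
`d_n(x,y) = max_{0 ≤ j < n} d(T^j x, T^j y)`). -/
def bowenBall [PseudoMetricSpace X] (T : X → X) (x : X) (n : ℕ) (ε : ℝ) : Set X :=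
  {y | ∀ j < n, dist (T^[j] x) (T^[j] y) < ε}

/-- `H_n^s(Z,ε)`: infimum of `Σ_i exp(-s n_i)` over countable covers of `Z` by Bowen balls
`B_{n_i}(x_i,ε)` with all `n_i ≥ n`. -/
noncomputable def bowenH [PseudoMetricSpace X] (T : X → X) (Z : Set X) (s ε : ℝ) (n : ℕ) :
    ℝ≥0∞ :=
  ⨅ (C : Set (X × ℕ)) (_ : C.Countable) (_ : ∀ p ∈ C, n ≤ p.2)
    (_ : Z ⊆ ⋃ p ∈ C, bowenBall T p.1 p.2 ε),
    ∑' p : C, ENNReal.ofReal (Real.exp (-s * ((p : X × ℕ).2 : ℝ)))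

/-- `h_top(Z,ε)`: the critical exponent of `s ↦ H^s(Z,ε) = sup_n H_n^s(Z,ε)`. -/
noncomputable def bowenEntropyRes [PseudoMetricSpace X] (T : X → X) (Z : Set X) (ε : ℝ) :
    ℝ≥0∞ :=
  sInf ((fun s : ℝ≥0 => (s : ℝ≥0∞)) '' {s : ℝ≥0 | (⨆ n, bowenH T Z (s : ℝ) ε n) = 0})

/-- Bowen topological entropy of a subset `Z`: `h_top(Z) = lim_{ε → 0} h_top(Z,ε)`
(the limit being a supremum by monotonicity in `ε`). -/
noncomputable def bowenEntropy [PseudoMetricSpace X] (T : X → X) (Z : Set X) : ℝ≥0∞ :=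
  ⨆ (ε : ℝ) (_ : 0 < ε), bowenEntropyRes T Z ε

/-- Entropy of the partition `P ∨ T⁻¹P ∨ ⋯ ∨ T⁻⁽ⁿ⁻¹⁾P`, where a countable partition is
encoded as a function `P : X → ℕ`: it is the Shannon entropy of the map
`x ↦ (P x, P (T x), …, P (Tⁿ⁻¹ x))`. -/
noncomputable def partInfo [MeasurableSpace X] (T : X → X) (μ : Measure X) (P : X → ℕ)
    (n : ℕ) : ℝ≥0∞ :=
  ∑' l : List ℕ, ENNReal.ofReal (Real.negMulLog
    ((μ ((fun x => (List.range n).map fun j => P (T^[j] x)) ⁻¹' {l})).toReal))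

/-- Measure-theoretic (Kolmogorov–Sinai) entropy `h_μ(T)`: supremum over finite measurable
partitions `P` of `lim_n (1/n) H_μ(P ∨ T⁻¹P ∨ ⋯ ∨ T⁻⁽ⁿ⁻¹⁾P)` (the limit exists by
subadditivity, so it may be written as a `liminf`). -/
noncomputable def ksEntropy [MeasurableSpace X] (T : X → X) (μ : Measure X) : ℝ≥0∞ :=
  ⨆ (P : X → ℕ) (_ : Measurable P) (_ : (Set.range P).Finite),
    Filter.atTop.liminf fun n : ℕ => partInfo T μ P n / (n : ℝ≥0∞)

/-- `x` is a generic point for `μ` : the empirical measures `(1/n) Σ_{j<n} δ_{T^j x}`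
converge to `μ` in the weak-star topology, i.e. Birkhoff averages of every continuous
function converge to its integral. -/
def IsGeneric [TopologicalSpace X] [MeasurableSpace X] (T : X → X) (μ : Measure X)
    (x : X) : Prop :=
  ∀ f : C(X, ℝ), Tendsto (fun n : ℕ => (∑ j ∈ Finset.range n, f (T^[j] x)) / (n : ℝ))
    atTop (𝓝 (∫ y, f y ∂μ))

/-- `μ ∈ V(x)` : `μ` is a weak-star limit point of the empirical measures of `x`. -/
def IsLimitMeasure [TopologicalSpace X] [MeasurableSpace X] (T : X → X) (x : X)
    (μ : Measure X) : Prop :=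
  ∃ φ : ℕ → ℕ, StrictMono φ ∧ ∀ f : C(X, ℝ),
    Tendsto (fun m : ℕ => (∑ j ∈ Finset.range (φ m), f (T^[j] x)) / (φ m : ℝ))
      atTop (𝓝 (∫ y, f y ∂μ))

/-- A system is saturated if `h_top(G_μ) = h_μ` for every invariant Borel probability
measure `μ`. -/
def Saturated [PseudoMetricSpace X] [MeasurableSpace X] (T : X → X) : Prop :=
  ∀ μ : Measure X, IsProbabilityMeasure μ → MeasurePreserving T μ μ →
    bowenEntropy T {x | IsGeneric T μ x} = ksEntropy T μ

/-- The specification property. -/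
def SpecificationProperty [PseudoMetricSpace X] (T : X → X) : Prop :=
  ∀ ε : ℝ, 0 < ε → ∃ m : ℕ, 1 ≤ m ∧
    ∀ k : ℕ, 2 ≤ k → ∀ x : ℕ → X, ∀ a b : ℕ → ℕ,
      (∀ i < k, a i ≤ b i) →
      (∀ i, i + 1 < k → b i + m ≤ a (i + 1)) →
      ∃ y : X, ∀ i < k, ∀ n ≤ b i - a i,
        dist (T^[a i + n] y) (T^[n] (x i)) < ε

theorem bowenH_iUnion_eq_zero [PseudoMetricSpace X] {T : X → X} {s ε : ℝ} {n : ℕ}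
    {Z : ℕ → Set X} (h : ∀ i, bowenH T (Z i) s ε n = 0) : bowenH T (⋃ i, Z i) s ε n = 0 := by
  by_contra h0
  obtain ⟨δ, hδ, hsum⟩ := ENNReal.exists_pos_sum_of_countable' h0 ℕ
  have key : ∀ i, ∃ C : Set (X × ℕ), C.Countable ∧ (∀ p ∈ C, n ≤ p.2) ∧
      (Z i ⊆ ⋃ p ∈ C, bowenBall T p.1 p.2 ε) ∧
      ∑' p : C, ENNReal.ofReal (Real.exp (-s * ((p : X × ℕ).2 : ℝ))) < δ i := by
    intro i
    have hi := (h i).trans_lt (hδ i)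
    simp only [bowenH, iInf_lt_iff] at hi
    obtain ⟨C, h1, h2, h3, h4⟩ := hi
    exact ⟨C, h1, h2, h3, h4⟩
  choose C hC hn hZ hlt using key
  refine hsum.not_ge ?_
  calc bowenH T (⋃ i, Z i) s ε n
      ≤ ∑' p : ⋃ i, C i, ENNReal.ofReal (Real.exp (-s * ((p : X × ℕ).2 : ℝ))) := by
        refine iInf₂_le_of_le (⋃ i, C i) (countable_iUnion hC) (iInf₂_le_of_le ?_ ?_ le_rfl)
        · intro p hp
          obtain ⟨i, hi⟩ := mem_iUnion.1 hp
          exact hn i p hi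
        · refine iUnion_subset fun i => (hZ i).trans ?_
          exact biUnion_subset_biUnion_left (subset_iUnion C i)
    _ ≤ ∑' i, ∑' p : C i, ENNReal.ofReal (Real.exp (-s * ((p : X × ℕ).2 : ℝ))) :=
        ENNReal.tsum_iUnion_le_tsum
          (fun p : X × ℕ => ENNReal.ofReal (Real.exp (-s * (p.2 : ℝ)))) C
    _ ≤ ∑' i, δ i := ENNReal.tsum_le_tsum fun i => (hlt i).le

theorem bowenH_le_card_mul [PseudoMetricSpace X] [Nonempty X] {K : Type*} {T : X → X} {Z : Set X}
    {s ε : ℝ} {n N : ℕ} (hn : n ≤ N) (key : X → K) (S : Finset K) (hS : ∀ x ∈ Z, key x ∈ S)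
    (hkey : ∀ x y, key x = key y → ∀ j < N, dist (T^[j] x) (T^[j] y) < ε) :
    bowenH T Z s ε n ≤ S.card * ENNReal.ofReal (Real.exp (-s * N)) := by
  classical
  let D : Finset (X × ℕ) := S.image fun κ => (Function.invFun key κ, N)
  have hD : ∀ p ∈ D, p.2 = N := by
    intro p hp
    obtain ⟨κ, -, rfl⟩ := Finset.mem_image.1 hp
    rfl
  calc bowenH T Z s ε n
      ≤ ∑' p : (D : Set (X × ℕ)), ENNReal.ofReal (Real.exp (-s * ((p : X × ℕ).2 : ℝ))) := by
        refine iInf₂_le_of_le _ D.countable_toSet (iInf₂_le_of_le ?_ ?_ le_rfl)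
        · intro p hp
          rw [hD p hp]
          exact hn
        · intro x hx
          refine mem_biUnion (Finset.mem_coe.2 (Finset.mem_image_of_mem _ (hS x hx))) ?_
          exact hkey _ _ (Function.invFun_eq ⟨x, rfl⟩)
    _ = ∑ p ∈ D, ENNReal.ofReal (Real.exp (-s * (p.2 : ℝ))) :=
        Finset.tsum_subtype' D fun p : X × ℕ => ENNReal.ofReal (Real.exp (-s * (p.2 : ℝ)))
    _ = D.card * ENNReal.ofReal (Real.exp (-s * N)) := by
        rw [Finset.sum_congr rfl fun p hp => by rw [hD p hp], Finset.sum_const, nsmul_eq_mul]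
    _ ≤ S.card * ENNReal.ofReal (Real.exp (-s * N)) := by
        gcongr
        exact Finset.card_image_le

theorem card_sum_neg_log_le {A : Type*} [Fintype A] {q : A → ℝ} (hq : ∀ a, 0 < q a)
    (hsum : ∑ a, q a = 1) (L : ℕ) (B : ℝ) :
    (({f : Fin L → A | ∑ i, -Real.log (q (f i)) ≤ B} : Finset (Fin L → A)).card : ℝ)
      ≤ Real.exp B := by
  set S : Finset (Fin L → A) := {f : Fin L → A | ∑ i, -Real.log (q (f i)) ≤ B}
  have h1 : (S.card : ℝ) * Real.exp (-B) ≤ 1 := by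
    calc (S.card : ℝ) * Real.exp (-B) = ∑ _f ∈ S, Real.exp (-B) := by simp
      _ ≤ ∑ f ∈ S, ∏ i, q (f i) := by
        refine Finset.sum_le_sum fun f hf => ?_
        have hf' : ∑ i, -Real.log (q (f i)) ≤ B := (Finset.mem_filter.1 hf).2
        rw [Finset.sum_neg_distrib] at hf'
        calc Real.exp (-B) ≤ Real.exp (∑ i, Real.log (q (f i))) :=
              Real.exp_le_exp.2 (by linarith)
          _ = ∏ i, q (f i) := by
              rw [Real.exp_sum]
              exact Finset.prod_congr rfl fun i _ => Real.exp_log (hq _)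
      _ ≤ ∑ f : Fin L → A, ∏ i, q (f i) :=
        Finset.sum_le_sum_of_subset_of_nonneg (Finset.subset_univ _)
          fun f _ _ => Finset.prod_nonneg fun i _ => (hq _).le
      _ = 1 := by rw [← Fintype.sum_pow, hsum, one_pow]
  rw [Real.exp_neg, ← div_eq_mul_inv] at h1
  exact (div_le_one (Real.exp_pos B)).1 h1

/-- The cross entropy of `p` relative to a suitable fully supported `q` is arbitrarily close to
the Shannon entropy of `p`. -/
theorem exists_pos_sum_mul_neg_log_lt {A : Type*} [Fintype A] {p : A → ℝ} (hp : ∀ a, 0 ≤ p a)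
    (hsum : ∑ a, p a = 1) {H : ℝ} (hH : ∑ a, Real.negMulLog (p a) < H) :
    ∃ q : A → ℝ, (∀ a, 0 < q a) ∧ ∑ a, q a = 1 ∧ ∑ a, p a * -Real.log (q a) < H := by
  obtain ⟨γ, hγ, hlt⟩ : ∃ γ > 0, ∑ a, Real.negMulLog (p a) + γ < H :=
    ⟨(H - ∑ a, Real.negMulLog (p a)) / 2, by linarith, by linarith⟩
  have hA : Nonempty A := by
    by_contra hA
    rw [not_nonempty_iff] at hA
    simp at hsum
  have hc : (0 : ℝ) < Fintype.card A := by exact_mod_cast Fintype.card_pos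
  have he : Real.exp (-γ) < 1 := by simpa using hγ
  have hu : 0 < (1 - Real.exp (-γ)) / Fintype.card A := div_pos (by linarith) hc
  refine ⟨fun a => Real.exp (-γ) * p a + (1 - Real.exp (-γ)) / Fintype.card A, fun a => ?_, ?_, ?_⟩
  · have := mul_nonneg (Real.exp_pos (-γ)).le (hp a)
    linarith
  · rw [Finset.sum_add_distrib, ← Finset.mul_sum, hsum, Finset.sum_const, Finset.card_univ,
      nsmul_eq_mul, mul_div_cancel₀ _ hc.ne']
    ring
  · refine lt_of_le_of_lt ?_ hlt
    calc _ ≤ ∑ a, (Real.negMulLog (p a) + p a * γ) := by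
          refine Finset.sum_le_sum fun a _ => ?_
          rcases (hp a).eq_or_lt with h0 | h0
          · simp [← h0]
          · have h1 : Real.log (Real.exp (-γ) * p a) ≤
                Real.log (Real.exp (-γ) * p a + (1 - Real.exp (-γ)) / Fintype.card A) :=
              Real.log_le_log (mul_pos (Real.exp_pos _) h0) (by linarith)
            rw [Real.log_mul (Real.exp_pos _).ne' h0.ne', Real.log_exp] at h1
            rw [Real.negMulLog]
            nlinarith
      _ = _ := by rw [Finset.sum_add_distrib, ← Finset.sum_mul, hsum, one_mul]

theorem sum_range_mul_comm {M : Type*} [AddCommMonoid M] (f : ℕ → M) (L m : ℕ) :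
    ∑ j ∈ Finset.range (L * m), f j = ∑ r : Fin m, ∑ i : Fin L, f (i * m + r) := by
  rw [Finset.sum_comm]
  induction L with
  | zero => simp
  | succ L ih =>
    rw [Nat.succ_mul, Finset.sum_range_add, ih, Fin.sum_univ_castSucc]
    simp [Finset.sum_range]

theorem integral_comp_eq_sum {A : Type*} [Fintype A] [MeasurableSpace A]
    [MeasurableSingletonClass A] [MeasurableSpace X] (ν : Measure X) [IsFiniteMeasure ν]
    {g : X → A} (hg : Measurable g) (φ : A → ℝ) :
    ∫ y, φ (g y) ∂ν = ∑ a, ν.real (g ⁻¹' {a}) * φ a := by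
  rw [← integral_map (φ := g) (f := φ) hg.aemeasurable
    Measurable.of_discrete.aestronglyMeasurable, integral_fintype .of_finite]
  simp [map_measureReal_apply hg (measurableSet_singleton _)]

theorem IsGeneric.tendsto_average_comp [PseudoMetricSpace X] [MeasurableSpace X] [BorelSpace X]
    [MeasurableSingletonClass X] [CompactSpace X] {A : Type*} [Fintype A] [MeasurableSpace A]
    [MeasurableSingletonClass A] {T : X → X} {μ : Measure X} [IsProbabilityMeasure μ] {x : X}
    (hx : IsGeneric T μ x) {g : X → A} (hg : Measurable g)
    (hfr : ∀ a, μ (frontier (g ⁻¹' {a})) = 0) (φ : A → ℝ) :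
    Tendsto (fun n : ℕ => (∑ j ∈ Finset.range n, φ (g (T^[j] x))) / (n : ℝ)) atTop
      (𝓝 (∑ a, μ.real (g ⁻¹' {a}) * φ a)) := by
  rw [← tendsto_add_atTop_iff_nat 1]
  let ν : ℕ → Measure X := fun n =>
    ((n + 1 : ℕ) : ℝ≥0∞)⁻¹ • ∑ j ∈ Finset.range (n + 1), Measure.dirac (T^[j] x)
  have hν : ∀ n, IsProbabilityMeasure (ν n) := fun n => ⟨by
    simp only [ν, Measure.smul_apply, Measure.finsetSum_apply, measure_univ, smul_eq_mul,
      Finset.sum_const, Finset.card_range, nsmul_eq_mul, mul_one]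
    exact ENNReal.inv_mul_cancel (by simp) (ENNReal.natCast_ne_top _)⟩
  have hint : ∀ (f : X → ℝ) (n : ℕ),
      ∫ y, f y ∂ν n = (∑ j ∈ Finset.range (n + 1), f (T^[j] x)) / ((n + 1 : ℕ) : ℝ) := by
    intro f n
    rw [integral_smul_measure, integral_finsetSum_measure fun j _ => integrable_dirac (by simp)]
    simp only [integral_dirac, ENNReal.toReal_inv, ENNReal.toReal_natCast, smul_eq_mul]
    rw [div_eq_inv_mul]
  let νs : ℕ → ProbabilityMeasure X := fun n => ⟨ν n, hν n⟩
  let μ' : ProbabilityMeasure X := ⟨μ, inferInstance⟩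
  have hlim : Tendsto νs atTop (𝓝 μ') := by
    rw [ProbabilityMeasure.tendsto_iff_forall_integral_tendsto]
    intro f
    have := (tendsto_add_atTop_iff_nat 1).2 (hx f.toContinuousMap)
    exact this.congr fun n => (hint f n).symm
  have hreal : ∀ a, Tendsto (fun n => (ν n).real (g ⁻¹' {a})) atTop (𝓝 (μ.real (g ⁻¹' {a}))) :=
    fun a => (ENNReal.tendsto_toReal (measure_ne_top _ _)).comp
      (ProbabilityMeasure.tendsto_measure_of_null_frontier_of_tendsto' hlim (hfr a))
  refine (tendsto_finsetSum Finset.univ fun a _ => (hreal a).mul_const (φ a)).congr fun n => ?_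
  rw [← integral_comp_eq_sum (ν n) hg φ, hint]

/-- The word of length `m` coding the first `m` points of the orbit of `x`. -/
def orbitWord {κ : Type*} (T : X → X) (P : X → κ) (m : ℕ) (x : X) : Fin m → κ :=
  fun i => P (T^[i] x)

theorem orbitWord_iterate_apply {κ : Type*} (T : X → X) (P : X → κ) (m j : ℕ) (x : X)
    (i : Fin m) : orbitWord T P m (T^[j] x) i = P (T^[i + j] x) := by
  rw [orbitWord, Function.iterate_add_apply]

theorem measurable_orbitWord {κ : Type*} [MeasurableSpace κ] [MeasurableSpace X] {T : X → X}
    (hT : Measurable T) {P : X → κ} (hP : Measurable P) (m : ℕ) :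
    Measurable (orbitWord T P m) :=
  measurable_pi_lambda _ fun i => hP.comp (hT.iterate i)

theorem measure_frontier_fiber_eq_zero {A : Type*} [TopologicalSpace X] [MeasurableSpace X]
    {μ : Measure X} {g : X → A} (hg : ∀ᵐ x ∂μ, ∀ᶠ y in 𝓝 x, g y = g x) (a : A) :
    μ (frontier (g ⁻¹' {a})) = 0 := by
  refine measure_mono_null (fun x hx => ?_) hg
  intro hloc
  rw [frontier_eq_closure_inter_closure] at hx
  have h1 := mem_closure_iff_frequently.1 hx.1
  have h2 := mem_closure_iff_frequently.1 hx.2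
  obtain ⟨y, hy, hyx⟩ := (h1.and_eventually hloc).exists
  obtain ⟨z, hz, hzx⟩ := (h2.and_eventually hloc).exists
  exact hz (hzx.trans (hyx.symm.trans hy))

theorem ae_eventually_orbitWord_eq {κ : Type*} [TopologicalSpace X] [MeasurableSpace X]
    {μ : Measure X} {T : X → X} (hT : Continuous T) (hinv : MeasurePreserving T μ μ) {P : X → κ}
    (hP : ∀ᵐ x ∂μ, ∀ᶠ y in 𝓝 x, P y = P x) (m : ℕ) :
    ∀ᵐ x ∂μ, ∀ᶠ y in 𝓝 x, orbitWord T P m y = orbitWord T P m x := by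
  have h : ∀ᵐ x ∂μ, ∀ i : Fin m, ∀ᶠ y in 𝓝 (T^[i] x), P y = P (T^[i] x) :=
    ae_all_iff.2 fun i => (hinv.iterate i).quasiMeasurePreserving.ae hP
  filter_upwards [h] with x hx
  filter_upwards [eventually_all.2 fun i : Fin m =>
    (hT.iterate i).continuousAt.eventually (hx i)] with y hy
  exact funext hy

theorem exists_partition_dist_lt [PseudoMetricSpace X] [CompactSpace X] [MeasurableSpace X]
    [BorelSpace X] (μ : Measure X) [IsFiniteMeasure μ] {ε : ℝ} (hε : 0 < ε) :
    ∃ (k : ℕ) (P : X → Fin k), Measurable P ∧ (∀ᵐ x ∂μ, ∀ᶠ y in 𝓝 x, P y = P x) ∧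
      ∀ x y, P x = P y → dist x y < ε := by
  classical
  have hball : ∀ x : X, ∃ r ∈ Ioo 0 (ε / 2), μ (frontier (Metric.ball x r)) = 0 := fun x => by
    simpa [Metric.thickening_singleton] using exists_null_frontier_thickening μ {x} (half_pos hε)
  choose r hr hfr using hball
  obtain ⟨t, ht⟩ := finite_cover_nhds fun x : X => Metric.ball_mem_nhds x (hr x).1
  let Q : X → t → Bool := fun x i => decide (x ∈ Metric.ball (i : X) (r i))
  have hQ : Measurable Q := measurable_pi_lambda _ fun i =>
    measurable_to_bool (by
      have : (fun x => Q x i) ⁻¹' {true} = Metric.ball (i : X) (r i) := by ext; simp [Q]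
      rw [this]
      exact Metric.isOpen_ball.measurableSet)
  have e := Fintype.equivFin (t → Bool)
  refine ⟨_, e ∘ Q, Measurable.of_discrete.comp hQ, ?_, fun x y hxy => ?_⟩
  · have h : ∀ᵐ x ∂μ, ∀ i : t, x ∉ frontier (Metric.ball (i : X) (r i)) :=
      ae_all_iff.2 fun i => measure_eq_zero_iff_ae_notMem.1 (hfr i)
    filter_upwards [h] with x hx
    have hloc : ∀ i : t, ∀ᶠ y in 𝓝 x, Q y i = Q x i := by
      intro i
      by_cases hxi : x ∈ Metric.ball (i : X) (r i)
      · filter_upwards [Metric.isOpen_ball.mem_nhds hxi] with y hy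
        simp only [Q, hxi, hy]
      · have hcl : x ∉ closure (Metric.ball (i : X) (r i)) := fun hc =>
          hx i ⟨hc, by rwa [Metric.isOpen_ball.interior_eq]⟩
        filter_upwards [isClosed_closure.isOpen_compl.mem_nhds hcl] with y hy
        have hy' : y ∉ Metric.ball (i : X) (r i) := fun hm => hy (subset_closure hm)
        simp only [Q, hxi, hy']
    filter_upwards [eventually_all.2 hloc] with y hy
    exact congrArg e (funext hy)
  · have hx : x ∈ ⋃ z ∈ t, Metric.ball z (r z) := by rw [ht]; trivial
    obtain ⟨z, hz, hxz⟩ := mem_iUnion₂.1 hx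
    have h1 : Q x ⟨z, hz⟩ = Q y ⟨z, hz⟩ := congrFun (e.injective hxy) _
    have hyz : y ∈ Metric.ball z (r z) := (decide_eq_decide.1 h1).1 hxz
    have h2 := dist_triangle_right x y z
    have h3 := (hr z).2
    rw [Metric.mem_ball] at hxz hyz
    linarith

theorem sum_negMulLog_le_partInfo [MeasurableSpace X] (T : X → X) (μ : Measure X)
    [IsProbabilityMeasure μ] {k : ℕ} (P : X → Fin k) (m : ℕ) :
    ENNReal.ofReal (∑ a, Real.negMulLog (μ.real (orbitWord T P m ⁻¹' {a})))
      ≤ partInfo T μ (fun x => (P x : ℕ)) m := by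
  rw [ENNReal.ofReal_sum_of_nonneg fun a _ =>
    Real.negMulLog_nonneg measureReal_nonneg measureReal_le_one,
    ← tsum_fintype (L := .unconditional _)]
  have hinj : Function.Injective fun a : Fin m → Fin k => List.ofFn fun i => (a i : ℕ) := by
    intro a b hab
    funext i
    exact Fin.ext (congrFun (List.ofFn_injective hab) i)
  refine le_trans (le_of_eq ?_) (ENNReal.tsum_comp_le_tsum_of_injective hinj _)
  refine tsum_congr fun a => ?_
  have hset : orbitWord T P m ⁻¹' {a} = (fun x => (List.range m).map fun j => (P (T^[j] x) : ℕ)) ⁻¹'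
      {List.ofFn fun i => (a i : ℕ)} := by
    ext x
    have hw : ((List.range m).map fun j => (P (T^[j] x) : ℕ)) =
        List.ofFn fun i => ((orbitWord T P m x i : Fin k) : ℕ) := by
      rw [List.ofFn_eq_map, ← List.map_coe_finRange_eq_range, List.map_map]
      rfl
    rw [mem_preimage, mem_preimage, hw, mem_singleton_iff, mem_singleton_iff]
    exact hinj.eq_iff.symm
  rw [hset]
  rfl

theorem bowenH_eq_zero_of_sum_neg_log_le [PseudoMetricSpace X] [Nonempty X] {κ : Type*}
    [Fintype κ] {T : X → X} {P : X → κ} {ε : ℝ} (hP : ∀ x y, P x = P y → dist x y < ε) {m : ℕ}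
    (hm : 0 < m) {q : (Fin m → κ) → ℝ} (hq : ∀ a, 0 < q a) (hqsum : ∑ a, q a = 1) {s s' : ℝ}
    (hs : s < s') {Z : Set X} {N : ℕ}
    (hZ : ∀ x ∈ Z, ∀ n ≥ N,
      ∑ j ∈ Finset.range n, -Real.log (q (orbitWord T P m (T^[j] x))) ≤ n * (m * s)) (n : ℕ) :
    bowenH T Z s' ε n = 0 := by
  classical
  set g := orbitWord T P m with hg
  have hbound : ∀ L ≥ max n N, bowenH T Z s' ε n ≤ ENNReal.ofReal
      (m * Fintype.card (Fin m → κ) * Real.exp (-((s' - s) * m) * L)) := by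
    intro L hL
    have hLm : L ≤ L * m := Nat.le_mul_of_pos_right L hm
    have hr : ∀ x, ∃ r : Fin m, x ∈ Z →
        ∑ i : Fin L, -Real.log (q (g (T^[i * m + r] x))) ≤ L * (m * s) := by
      intro x
      by_cases hx : x ∈ Z
      · have h1 := hZ x hx (L * m) ((le_max_right n N).trans (hL.trans hLm))
        rw [sum_range_mul_comm] at h1
        have : Nonempty (Fin m) := ⟨⟨0, hm⟩⟩
        obtain ⟨r, -, hr⟩ := Finset.exists_le_of_sum_le (s := Finset.univ)
          (f := fun r : Fin m => ∑ i : Fin L, -Real.log (q (g (T^[i * m + r] x))))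
          (g := fun _ => (L : ℝ) * (m * s)) Finset.univ_nonempty (by
            refine h1.trans (le_of_eq ?_)
            simp only [Finset.sum_const, Finset.card_univ, Fintype.card_fin, nsmul_eq_mul]
            push_cast
            ring)
        exact ⟨r, fun _ => hr⟩
      · exact ⟨⟨0, hm⟩, fun h => absurd h hx⟩
    choose r hr using hr
    let S : Finset (Fin L → Fin m → κ) := {f | ∑ i, -Real.log (q (f i)) ≤ L * (m * s)}
    have hcover := bowenH_le_card_mul (T := T) (Z := Z) (s := s') (ε := ε) (n := n) (N := L * m)
      ((le_max_left n N).trans (hL.trans hLm))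
      (fun x => (r x, g x, fun i : Fin L => g (T^[i * m + r x] x)))
      (Finset.univ ×ˢ Finset.univ ×ˢ S)
      (fun x hx => by simpa [S] using hr x hx) (by
        intro x y hxy j hj
        refine hP _ _ ?_
        simp only [Prod.mk.injEq] at hxy
        obtain ⟨h1, h2, h3⟩ := hxy
        rcases lt_or_ge j m with hjm | hjm
        · exact congrFun h2 ⟨j, hjm⟩
        · have hrj : (r x : ℕ) < j := (r x).2.trans_le hjm
          have hi : (j - r x) / m < L := Nat.div_lt_of_lt_mul (by rw [mul_comm]; omega)
          have h4 := congrFun (congrFun h3 ⟨_, hi⟩) ⟨(j - r x) % m, Nat.mod_lt _ hm⟩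
          rw [← h1, hg, orbitWord_iterate_apply, orbitWord_iterate_apply] at h4
          have h5 : (j - r x) % m + ((j - r x) / m * m + r x) = j := by
            have := Nat.mod_add_div' (j - r x) m
            omega
          simpa only [h5] using h4)
    refine hcover.trans ?_
    rw [← ENNReal.ofReal_natCast, ← ENNReal.ofReal_mul (Nat.cast_nonneg _)]
    refine ENNReal.ofReal_le_ofReal ?_
    have hS : (S.card : ℝ) ≤ Real.exp (L * (m * s)) := card_sum_neg_log_le hq hqsum L _
    rw [Finset.card_product, Finset.card_product, Finset.card_univ, Finset.card_univ,
      Fintype.card_fin]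
    push_cast
    calc (m : ℝ) * (Fintype.card (Fin m → κ) * S.card) * Real.exp (-s' * (L * m))
        ≤ m * (Fintype.card (Fin m → κ) * Real.exp (L * (m * s))) * Real.exp (-s' * (L * m)) := by
          gcongr
      _ = m * Fintype.card (Fin m → κ) *
          (Real.exp (L * (m * s)) * Real.exp (-s' * (L * m))) := by ring
      _ = _ := by
          rw [← Real.exp_add]
          congr 2
          ring
  have hlim : Tendsto (fun L : ℕ => ENNReal.ofReal
      (m * Fintype.card (Fin m → κ) * Real.exp (-((s' - s) * m) * L))) atTop (𝓝 0) := by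
    rw [← ENNReal.ofReal_zero]
    refine ENNReal.tendsto_ofReal ?_
    rw [← mul_zero ((m : ℝ) * Fintype.card (Fin m → κ))]
    refine (Real.tendsto_exp_atBot.comp ?_).const_mul _
    refine tendsto_natCast_atTop_atTop.const_mul_atTop_of_neg ?_
    have : 0 < (s' - s) * m := mul_pos (by linarith) (by exact_mod_cast hm)
    linarith
  refine nonpos_iff_eq_zero.1 (ge_of_tendsto hlim ?_)
  filter_upwards [eventually_ge_atTop (max n N)] with L hL using hbound L hL

theorem bowenH_generic_eq_zero [PseudoMetricSpace X] [CompactSpace X] [MeasurableSpace X]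
    [BorelSpace X] [MeasurableSingletonClass X] {T : X → X} (hT : Continuous T) {μ : Measure X}
    [IsProbabilityMeasure μ] (hinv : MeasurePreserving T μ μ) {s s' : ℝ≥0}
    (hs : ksEntropy T μ < s) (hss : s < s') {ε : ℝ} (hε : 0 < ε) (n : ℕ) :
    bowenH T {x | IsGeneric T μ x} s' ε n = 0 := by
  have hX : Nonempty X := nonempty_of_isProbabilityMeasure μ
  obtain ⟨k, P, hPm, hPloc, hPε⟩ := exists_partition_dist_lt μ hε
  have hlim : Filter.atTop.liminf (fun m : ℕ =>
      partInfo T μ (fun x => (P x : ℕ)) m / (m : ℝ≥0∞)) < s := by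
    refine lt_of_le_of_lt ?_ hs
    refine le_iSup₂_of_le (fun x => (P x : ℕ)) (Measurable.of_discrete.comp hPm) ?_
    exact le_iSup_of_le ((finite_range Fin.val).subset
      (range_subset_iff.2 fun x => mem_range_self (P x))) le_rfl
  obtain ⟨m, hlt, hm⟩ :=
    ((frequently_lt_of_liminf_lt (by isBoundedDefault) hlim).and_eventually
      (eventually_gt_atTop 0)).exists
  have hm' : (0 : ℝ) < m := by exact_mod_cast hm
  have hgm : Measurable (orbitWord T P m) := measurable_orbitWord hT.measurable hPm m
  have hH : ∑ a, Real.negMulLog (μ.real (orbitWord T P m ⁻¹' {a})) < m * s := by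
    rw [ENNReal.div_lt_iff (Or.inl (by exact_mod_cast hm.ne'))
      (Or.inl (ENNReal.natCast_ne_top m))] at hlt
    have h1 := (sum_negMulLog_le_partInfo T μ P m).trans_lt hlt
    rw [ENNReal.ofReal_lt_iff_lt_toReal (Finset.sum_nonneg fun a _ =>
      Real.negMulLog_nonneg measureReal_nonneg measureReal_le_one)
      (ENNReal.mul_ne_top ENNReal.coe_ne_top (ENNReal.natCast_ne_top m))] at h1
    simpa [mul_comm] using h1
  have hsum : ∑ a, μ.real (orbitWord T P m ⁻¹' {a}) = 1 := by
    simpa using (integral_comp_eq_sum μ hgm fun _ => (1 : ℝ)).symm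
  obtain ⟨q, hq, hqsum, hqlt⟩ :=
    exists_pos_sum_mul_neg_log_lt (fun a => measureReal_nonneg) hsum hH
  let Z : ℕ → Set X := fun N => {x | ∀ n ≥ N,
    ∑ j ∈ Finset.range n, -Real.log (q (orbitWord T P m (T^[j] x))) ≤ n * (m * s)}
  have hsub : {x | IsGeneric T μ x} ⊆ ⋃ N, Z N := by
    intro x hx
    have hav := IsGeneric.tendsto_average_comp hx hgm
      (measure_frontier_fiber_eq_zero (ae_eventually_orbitWord_eq hT hinv hPloc m))
      fun a => -Real.log (q a)
    obtain ⟨N, hN⟩ := eventually_atTop.1 ((hav.eventually (gt_mem_nhds hqlt)).and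
      (eventually_gt_atTop 0))
    refine mem_iUnion.2 ⟨N, fun n hn => ?_⟩
    obtain ⟨h1, h2⟩ := hN n hn
    rw [div_lt_iff₀ (by exact_mod_cast h2)] at h1
    linarith
  have hzero := bowenH_iUnion_eq_zero (Z := Z) fun N =>
    bowenH_eq_zero_of_sum_neg_log_le hPε hm hq hqsum (NNReal.coe_lt_coe.2 hss)
      (fun x hx => hx) n
  refine nonpos_iff_eq_zero.1 (le_of_le_of_eq ?_ hzero)
  exact iInf_mono fun C => iInf_mono fun _ => iInf_mono fun _ =>
    iInf_mono' fun h => ⟨hsub.trans h, le_rfl⟩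

/-- **(Bowen).** For any dynamical system on a compact metric space and any invariant
Borel probability measure `μ`, the Bowen topological entropy of the set of `μ`-generic
points is at most `h_μ`. -/
theorem entropy_of_generic_le {X : Type*} [MetricSpace X] [CompactSpace X]
    [MeasurableSpace X] [BorelSpace X] (T : X → X) (hT : Continuous T)
    (μ : Measure X) (hμ : IsProbabilityMeasure μ) (hinv : MeasurePreserving T μ μ) :
    bowenEntropy T {x : X | IsGeneric T μ x} ≤ ksEntropy T μ := by
  refine iSup₂_le fun ε hε => le_of_forall_gt fun c hc => ?_
  obtain ⟨s', hs', hc'⟩ := ENNReal.lt_iff_exists_nnreal_btwn.1 hc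
  obtain ⟨s, hs, hss⟩ := ENNReal.lt_iff_exists_nnreal_btwn.1 hs'
  refine lt_of_le_of_lt (sInf_le ⟨s', ?_, rfl⟩) hc'
  simp [bowenH_generic_eq_zero hT hinv hs (ENNReal.coe_lt_coe.1 hss) hε]
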